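/- For all real a > 0 and b > 0, ∫₀^∞ w^{−1/2} · exp(−a/w − b·w) dw = √(π/b) · exp(−2√(a·b)). -/

import Mathlib

open MeasureTheory Real

/-!
With `w = x ^ 2` the integral becomes `2 ∫₀^∞ exp (-a / x ^ 2 - b * x ^ 2) dx`, and completing the
square turns the exponent into `-2 √(a * b) - (√b * x - √a / x) ^ 2`. What remains is a
Cauchy–Schlömilch integral `∫₀^∞ f (p * x - q / x) dx` of an even function `f`. The inversion
`x ↦ (q / p) / x` changes the sign of `u = p * x - q / x` and exchanges the weights `p` and
`q / x ^ 2`, so both weights give the same integral; their sum is `du / dx`, and `u` runs over `ℝ`.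
-/

section CauchySchlomilch

open Set

variable {E : Type*} [NormedAddCommGroup E] [NormedSpace ℝ E] {p q : ℝ}

lemma hasDerivAt_mul_sub_div (p q : ℝ) {x : ℝ} (hx : x ≠ 0) :
    HasDerivAt (fun x ↦ p * x - q / x) (p + q / x ^ 2) x := by
  simp only [div_eq_mul_inv]
  refine (((hasDerivAt_id' x).const_mul p).sub ((hasDerivAt_inv hx).const_mul q)).congr_deriv ?_
  ring

lemma strictMonoOn_mul_sub_div (hp : 0 < p) (hq : 0 ≤ q) :
    StrictMonoOn (fun x ↦ p * x - q / x) (Ioi 0) := by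
  intro x (hx : 0 < x) y _ hxy
  have hdiv : q / y ≤ q / x := by gcongr
  have hmul : p * x < p * y := by gcongr
  dsimp only
  linarith

lemma image_mul_sub_div_Ioi_zero (hp : 0 < p) (hq : 0 < q) :
    (fun x ↦ p * x - q / x) '' Ioi 0 = univ := by
  refine eq_univ_of_forall fun u ↦ ?_
  -- The preimage of `u` is the positive root of `p * x ^ 2 - u * x - q`.
  set s := √(u ^ 2 + 4 * p * q)
  have hs : s ^ 2 = u ^ 2 + 4 * p * q := sq_sqrt (by positivity)
  have hus : 0 < u + s := by
    have habs : |u| < s := lt_sqrt_of_sq_lt (by rw [sq_abs]; linarith [mul_pos hp hq])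
    linarith [neg_abs_le u]
  refine ⟨(u + s) / (2 * p), div_pos hus (by positivity), ?_⟩
  field_simp
  linear_combination hs

lemma integral_Ioi_add_div_sq_smul_comp_mul_sub_div (f : ℝ → E) (hp : 0 < p) (hq : 0 < q) :
    ∫ x in Ioi 0, (p + q / x ^ 2) • f (p * x - q / x) = ∫ u, f u := by
  rw [← integral_image_eq_integral_deriv_smul_of_monotoneOn measurableSet_Ioi
      (fun x hx ↦ (hasDerivAt_mul_sub_div p q (ne_of_gt hx)).hasDerivWithinAt)
      (strictMonoOn_mul_sub_div hp hq.le).monotoneOn,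
    image_mul_sub_div_Ioi_zero hp hq, setIntegral_univ]

lemma integrableOn_Ioi_add_div_sq_smul_comp_mul_sub_div_iff (f : ℝ → E) (hp : 0 < p)
    (hq : 0 < q) :
    IntegrableOn (fun x ↦ (p + q / x ^ 2) • f (p * x - q / x)) (Ioi 0) ↔ Integrable f := by
  rw [← integrableOn_image_iff_integrableOn_deriv_smul_of_monotoneOn measurableSet_Ioi
      (fun x hx ↦ (hasDerivAt_mul_sub_div p q (ne_of_gt hx)).hasDerivWithinAt)
      (strictMonoOn_mul_sub_div hp hq.le).monotoneOn,
    image_mul_sub_div_Ioi_zero hp hq, integrableOn_univ]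

lemma integrableOn_Ioi_comp_mul_sub_div {f : ℝ → E} (hf : Integrable f) (hp : 0 < p)
    (hq : 0 < q) : IntegrableOn (fun x ↦ f (p * x - q / x)) (Ioi 0) := by
  have hweight (x : ℝ) : p ≤ p + q / x ^ 2 := le_add_of_nonneg_right (by positivity)
  have hbound (x : ℝ) : ‖(p + q / x ^ 2)⁻¹‖ ≤ p⁻¹ := by
    rw [norm_inv, norm_of_nonneg (hp.le.trans (hweight x))]
    exact inv_anti₀ hp (hweight x)
  have h := ((integrableOn_Ioi_add_div_sq_smul_comp_mul_sub_div_iff f hp hq).2 hf).bdd_smul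
    (φ := fun x ↦ (p + q / x ^ 2)⁻¹) p⁻¹
    (Measurable.aestronglyMeasurable (by fun_prop)) (.of_forall hbound)
  refine h.congr (.of_forall fun x ↦ ?_)
  exact inv_smul_smul₀ (hp.trans_le (hweight x)).ne' _

lemma integral_Ioi_div_sq_smul_comp_div (f : ℝ → E) {c : ℝ} (hc : 0 < c) :
    ∫ x in Ioi 0, (c / x ^ 2) • f (c / x) = ∫ x in Ioi 0, f x := by
  calc ∫ x in Ioi 0, (c / x ^ 2) • f (c / x)
    _ = ∫ x in Ioi 0, (|(-1 : ℝ)| * x ^ ((-1 : ℝ) - 1)) • c • f (c * x ^ (-1 : ℝ)) := by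
      refine setIntegral_congr_fun measurableSet_Ioi fun x (hx : 0 < x) ↦ ?_
      have hpow : x ^ ((-1 : ℝ) - 1) = (x ^ 2)⁻¹ := by
        rw [← rpow_natCast, ← rpow_neg hx.le]
        norm_num
      simp only [hpow, rpow_neg_one, abs_neg, abs_one, one_mul, smul_smul, div_eq_mul_inv,
        mul_comm c]
    _ = ∫ x in Ioi 0, c • f (c * x) :=
      integral_comp_rpow_Ioi (fun x ↦ c • f (c * x)) (by norm_num)
    _ = ∫ x in Ioi 0, f x := by
      rw [integral_smul, integral_comp_mul_left_Ioi' f 0 hc, mul_zero]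

lemma integral_Ioi_div_sq_smul_comp_mul_sub_div_of_even {f : ℝ → E} (hf : f.Even) (hp : 0 < p)
    (hq : 0 < q) :
    ∫ x in Ioi 0, (q / x ^ 2) • f (p * x - q / x) = p • ∫ x in Ioi 0, f (p * x - q / x) := by
  rw [← integral_Ioi_div_sq_smul_comp_div _ (div_pos hq hp), ← integral_smul]
  refine setIntegral_congr_fun measurableSet_Ioi fun x (hx : 0 < x) ↦ ?_
  have hneg : p * (q / p / x) - q / (q / p / x) = -(p * x - q / x) := by
    field_simp
    ring
  have hweight : q / p / x ^ 2 * (q / (q / p / x) ^ 2) = p := by field_simp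
  simp only [hneg, hf _, hweight, smul_smul]

theorem integral_Ioi_comp_mul_sub_div_of_even {f : ℝ → E} (hf_int : Integrable f)
    (hf_even : f.Even) (hp : 0 < p) (hq : 0 < q) :
    ∫ x in Ioi 0, f (p * x - q / x) = (2 * p)⁻¹ • ∫ u, f u := by
  have hp_int : IntegrableOn (fun x ↦ p • f (p * x - q / x)) (Ioi 0) :=
    (integrableOn_Ioi_comp_mul_sub_div hf_int hp hq).smul p
  have hq_int : IntegrableOn (fun x ↦ (q / x ^ 2) • f (p * x - q / x)) (Ioi 0) := by
    have hsum := (integrableOn_Ioi_add_div_sq_smul_comp_mul_sub_div_iff f hp hq).2 hf_int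
    simpa only [add_smul, Pi.sub_def, add_sub_cancel_left] using hsum.sub hp_int
  rw [eq_inv_smul_iff₀ (by positivity)]
  calc (2 * p) • ∫ x in Ioi 0, f (p * x - q / x)
    _ = (∫ x in Ioi 0, p • f (p * x - q / x)) +
          ∫ x in Ioi 0, (q / x ^ 2) • f (p * x - q / x) := by
      rw [integral_smul, integral_Ioi_div_sq_smul_comp_mul_sub_div_of_even hf_even hp hq,
        two_mul, add_smul]
    _ = ∫ x in Ioi 0, (p + q / x ^ 2) • f (p * x - q / x) := by
      simp only [← integral_add hp_int hq_int, add_smul]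
    _ = ∫ u, f u := integral_Ioi_add_div_sq_smul_comp_mul_sub_div f hp hq

end CauchySchlomilch

lemma integral_Ioi_rpow_neg_half_smul {E : Type*} [NormedAddCommGroup E] [NormedSpace ℝ E]
    (f : ℝ → E) :
    ∫ w in Set.Ioi (0 : ℝ), w ^ (-(1 / 2) : ℝ) • f w =
      (2 : ℝ) • ∫ x in Set.Ioi (0 : ℝ), f (x ^ 2) := by
  rw [← integral_comp_rpow_Ioi_of_pos two_pos, ← integral_smul]
  refine setIntegral_congr_fun measurableSet_Ioi fun x (hx : 0 < x) ↦ ?_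
  have hroot : (x ^ 2) ^ (-(1 / 2) : ℝ) = x⁻¹ := by
    rw [← rpow_two, ← rpow_mul hx.le, ← rpow_neg_one]
    norm_num
  have hexp : (2 : ℝ) - 1 = 1 := by norm_num
  simp only [hexp, rpow_one, rpow_two, hroot, smul_smul, mul_inv_cancel_right₀ hx.ne']

lemma neg_div_sq_sub_mul_sq_eq {a b x : ℝ} (ha : 0 ≤ a) (hb : 0 ≤ b) (hx : x ≠ 0) :
    -(a / x ^ 2) - b * x ^ 2 = -2 * √(a * b) - (√b * x - √a / x) ^ 2 := by
  rw [sqrt_mul ha]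
  nth_rw 1 [← sq_sqrt ha, ← sq_sqrt hb]
  field_simp
  ring

lemma integral_Ioi_exp_neg_div_sq_sub_mul_sq {a b : ℝ} (ha : 0 < a) (hb : 0 < b) :
    ∫ x in Set.Ioi (0 : ℝ), exp (-(a / x ^ 2) - b * x ^ 2) =
      √(π / b) / 2 * exp (-2 * √(a * b)) := by
  have hgauss_even : (fun u : ℝ ↦ exp (-1 * u ^ 2)).Even := fun u ↦ by simp only [neg_sq]
  calc ∫ x in Set.Ioi (0 : ℝ), exp (-(a / x ^ 2) - b * x ^ 2)
    _ = ∫ x in Set.Ioi (0 : ℝ), exp (-2 * √(a * b)) * exp (-1 * (√b * x - √a / x) ^ 2) := by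
      refine setIntegral_congr_fun measurableSet_Ioi fun x hx ↦ ?_
      simp only [neg_div_sq_sub_mul_sq_eq ha.le hb.le (ne_of_gt hx), sub_eq_add_neg (-2 * √(a * b)),
        exp_add, neg_one_mul]
    _ = exp (-2 * √(a * b)) * ((2 * √b)⁻¹ * √π) := by
      rw [integral_const_mul, integral_Ioi_comp_mul_sub_div_of_even
        (integrable_exp_neg_mul_sq one_pos) hgauss_even (sqrt_pos.2 hb) (sqrt_pos.2 ha),
        integral_gaussian, div_one, smul_eq_mul]
    _ = √(π / b) / 2 * exp (-2 * √(a * b)) := by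
      rw [sqrt_div pi_pos.le]
      ring

/-- For `a, b > 0`, `∫₀^∞ w^{−1/2} exp(−a/w − b·w) dw = √(π/b) · exp(−2√(ab))`. -/
theorem integral_rpow_neg_half_exp_sub
    (a b : ℝ) (ha : 0 < a) (hb : 0 < b) :
    ∫ w in Set.Ioi (0 : ℝ), w ^ (-(1 / 2) : ℝ) * Real.exp (-(a / w) - b * w)
      = Real.sqrt (Real.pi / b) * Real.exp (-2 * Real.sqrt (a * b)) := by
  calc ∫ w in Set.Ioi (0 : ℝ), w ^ (-(1 / 2) : ℝ) * exp (-(a / w) - b * w)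
    _ = 2 * ∫ x in Set.Ioi (0 : ℝ), exp (-(a / x ^ 2) - b * x ^ 2) :=
      integral_Ioi_rpow_neg_half_smul fun w ↦ exp (-(a / w) - b * w)
    _ = √(π / b) * exp (-2 * √(a * b)) := by
      rw [integral_Ioi_exp_neg_div_sq_sub_mul_sq ha hb]
      ring
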